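/- For every δ ∈ [1/2, 1] there exist sets W, Wᴵ, Wᴵᴵ ⊆ ⟦𝕐⟧ such that dim_H(W) = dim_H(Wᴵ) = dim_H(Wᴵᴵ) = δ, neither player has a winning strategy in the binary Gale–Stewart game with target set W, Player I has a winning strategy in the game with target set Wᴵ, and Player II has a winning strategy in the game with target set Wᴵᴵ. -/

import Mathlib

open Metric Set Filter MeasureTheory

noncomputable local instance : MetricSpace (ℕ → Bool) := PiNat.metricSpace

/-- The finite prefix `⟨x 0, …, x (n-1)⟩` of a play. -/
def prefixList (x : ℕ → Bool) (n : ℕ) : List Bool := List.ofFn fun i : Fin n => x i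

/-- `x` is a play consistent with the Player I pure strategy `sI`. -/
def ConsistentI (sI : List Bool → Bool) (x : ℕ → Bool) : Prop :=
  ∀ n : ℕ, Even n → x n = sI (prefixList x n)

/-- `x` is a play consistent with the Player II pure strategy `sII`. -/
def ConsistentII (sII : List Bool → Bool) (x : ℕ → Bool) : Prop :=
  ∀ n : ℕ, Odd n → x n = sII (prefixList x n)

open scoped Cardinal ENNReal NNReal Topology

/-- A family of sets, each at least as large as the index type, has an injective choice function. -/
theorem exists_injective_choice {ι α : Type} (S : ι → Set α) (h : ∀ i, #ι ≤ #(S i)) :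
    ∃ f : ι → α, Function.Injective f ∧ ∀ i, f i ∈ S i := by
  obtain ⟨r, _, hr⟩ := Cardinal.exists_ord_eq ι
  have key (i : ι) (g : ∀ j, r j i → α) : ∃ a ∈ S i, ∀ j (hj : r j i), g j hj ≠ a := by
    by_contra! hcon
    have hsub : S i ⊆ range fun j : {j // r j i} => g j.1 j.2 := by
      intro a ha
      obtain ⟨j, hj, hja⟩ := hcon a ha
      exact ⟨⟨j, hj⟩, hja⟩
    exact ((h i).trans ((Cardinal.mk_le_mk_of_subset hsub).trans Cardinal.mk_range_le)).not_gt
      (Cardinal.card_typein_lt i hr)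
  choose F hFS hF using key
  let f : ι → α := (IsWellFounded.wf : WellFounded r).fix F
  have hf (i : ι) : f i = F i fun j _ => f j := WellFounded.fix_eq _ _ _
  have hne {i j : ι} (hij : r j i) : f j ≠ f i := by
    rw [hf i]
    exact hF i (fun j _ => f j) j hij
  refine ⟨f, fun i j hij => ?_, fun i => hf i ▸ hFS i _⟩
  rcases trichotomous_of r i j with hlt | heq | hgt
  · exact absurd hij (hne hlt)
  · exact heq
  · exact absurd hij.symm (hne hgt)

@[simp]
theorem length_prefixList (x : ℕ → Bool) (n : ℕ) : (prefixList x n).length = n := by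
  simp [prefixList]

theorem prefixList_succ (x : ℕ → Bool) (n : ℕ) :
    prefixList x (n + 1) = prefixList x n ++ [x n] := by
  exact List.ofFn_succ_last

/-- A rule prescribing each bit from the preceding ones has a play following it. -/
theorem exists_play (r : List Bool → Bool) : ∃ x : ℕ → Bool, ∀ n, x n = r (prefixList x n) := by
  let L : ℕ → List Bool := fun n => Nat.rec [] (fun _ l => l ++ [r l]) n
  have hL (n : ℕ) : prefixList (fun n => r (L n)) n = L n := by
    induction n with
    | zero => rfl
    | succ n ih => rw [prefixList_succ, ih]
  exact ⟨fun n => r (L n), fun n => by rw [hL]⟩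

/-- If a rule is imposed only outside an infinite set of positions, then at least continuum many
plays follow it. -/
theorem continuum_le_mk_plays (r : List Bool → Bool) {S : Set ℕ} (hS : S.Infinite) :
    𝔠 ≤ #{x : ℕ → Bool | ∀ n ∉ S, x n = r (prefixList x n)} := by
  classical
  have := hS.to_subtype
  have hcard : #(S → Bool) = 𝔠 := by simp
  rw [← hcard]
  choose F hF using fun b : S → Bool =>
    exists_play fun l => if h : l.length ∈ S then b ⟨l.length, h⟩ else r l
  simp only [length_prefixList] at hF
  refine Cardinal.mk_le_of_injective (f := fun b => ⟨F b, fun n hn => ?_⟩) fun b c hbc => ?_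
  · rw [hF b n, dif_neg hn]
  · funext ⟨n, hn⟩
    have h := congrFun (Subtype.ext_iff.1 hbc) n
    simpa only [hF b n, hF c n, dif_pos hn] using h

/-- There is a set of plays meeting the plays of every Player I strategy, consisting of plays with
second bit `true`, and missing, for every Player II strategy, some consistent play that vanishes
outside `A`. -/
theorem exists_nondetermining_set {A : ℕ → Prop} (hodd : ∀ n, Odd n → A n)
    (hA : {n | Even n ∧ A n}.Infinite) :
    ∃ Y : Set (ℕ → Bool), (∀ x ∈ Y, x 1 = true) ∧
      (∀ sI, ∃ x ∈ Y, ConsistentI sI x) ∧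
      ∀ sII, ∃ x ∉ Y, ConsistentII sII x ∧ ∀ n, ¬ A n → x n = false := by
  let S : (List Bool → Bool) ⊕ (List Bool → Bool) → Set (ℕ → Bool) :=
    Sum.elim (fun sI => {x | ConsistentI sI x ∧ x 1 = true})
      fun sII => {x | ConsistentII sII x ∧ ∀ n, ¬ A n → x n = false}
  have hS (i) : #((List Bool → Bool) ⊕ (List Bool → Bool)) ≤ #(S i) := by
    have hc : #((List Bool → Bool) ⊕ (List Bool → Bool)) = 𝔠 := by simp
    rw [hc]
    rcases i with sI | sII
    · have hinf : {n : ℕ | Odd n ∧ n ≠ 1}.Infinite := by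
        refine infinite_of_injective_forall_mem (f := fun n : ℕ => 2 * n + 3)
          (fun a b hab => by simpa using hab) fun n => ⟨⟨n + 1, by ring⟩, by lia⟩
      refine (continuum_le_mk_plays (fun l => if Even l.length then sI l else true) hinf).trans
        (Cardinal.mk_le_mk_of_subset fun x hx => ⟨fun n hn => ?_, ?_⟩)
      · have h := hx n fun h => Nat.not_odd_iff_even.2 hn h.1
        simpa [hn] using h
      · simpa using hx 1 fun h => h.2 rfl
    · refine (continuum_le_mk_plays (fun l => if Odd l.length then sII l else false) hA).trans
        (Cardinal.mk_le_mk_of_subset fun x hx => ⟨fun n hn => ?_, fun n hn => ?_⟩)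
      · have h := hx n fun h => Nat.not_even_iff_odd.2 hn h.1
        simpa [hn] using h
      · have h := hx n fun h => hn h.2
        simpa [mt (hodd n) hn] using h
  obtain ⟨f, hinj, hf⟩ := exists_injective_choice S hS
  refine ⟨range fun sI => f (.inl sI), ?_, fun sI => ⟨_, ⟨sI, rfl⟩, (hf (.inl sI)).1⟩,
    fun sII => ⟨f (.inr sII), ?_, hf (.inr sII)⟩⟩
  · rintro _ ⟨sI, rfl⟩
    exact (hf (.inl sI)).2
  · rintro ⟨sI, h⟩
    exact Sum.inl_ne_inr (hinj h)

theorem PiNat.edist_bool_eq_of_ne {x y : ℕ → Bool} (h : x ≠ y) :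
    edist x y = 2⁻¹ ^ PiNat.firstDiff x y := by
  rw [edist_dist, PiNat.dist_eq_of_ne h, ENNReal.ofReal_pow (by norm_num), one_div,
    ENNReal.ofReal_inv_of_pos two_pos, ENNReal.ofReal_ofNat]

theorem PiNat.ediam_cylinder_bool_le (x : ℕ → Bool) (n : ℕ) :
    ediam (PiNat.cylinder x n) ≤ 2⁻¹ ^ n := by
  refine ediam_le fun y hy z hz => ?_
  rcases eq_or_ne y z with rfl | hyz
  · simp
  · rw [PiNat.edist_bool_eq_of_ne hyz]
    refine pow_le_pow_right_of_le_one' (ENNReal.inv_le_one.2 one_le_two) ?_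
    refine (PiNat.mem_cylinder_iff_le_firstDiff hyz n).1 fun i hi => ?_
    rw [hy i hi, hz i hi]

/-- The set of binary sequences vanishing outside `A`. -/
def zeroOff (A : ℕ → Prop) : Set (ℕ → Bool) := {x | ∀ n, ¬ A n → x n = false}

theorem dimH_zeroOff_le {A : ℕ → Prop} [DecidablePred A] {d : ℝ≥0}
    (h : ∀ᶠ n : ℕ in atTop, (Nat.count A n : ℝ) ≤ d * n) : dimH (zeroOff A) ≤ d := by
  refine dimH_le_of_hausdorffMeasure_ne_top (ne_top_of_le_ne_top ENNReal.one_ne_top ?_)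
  refine (Measure.hausdorffMeasure_le_liminf_sum (d : ℝ) (zeroOff A) (l := atTop)
    (ι := fun n : ℕ => ((Finset.range n).filter A).powerset)
    (fun n : ℕ => (2⁻¹ : ℝ≥0∞) ^ n)
    (ENNReal.tendsto_pow_atTop_nhds_zero_of_lt_one (by simp))
    (fun n S => PiNat.cylinder (fun i => decide (i ∈ S.1)) n)
    (.of_forall fun n S => PiNat.ediam_cylinder_bool_le _ n) (.of_forall fun n x hx => ?_)).trans ?_
  · refine mem_iUnion.2 ⟨⟨(Finset.range n).filter fun i => x i = true, ?_⟩, fun i hi => ?_⟩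
    · simp only [Finset.mem_powerset]
      refine Finset.monotone_filter_right _ fun i _ hi => ?_
      by_contra hA
      simp [hx i hA] at hi
    · simp [hi]
  · refine liminf_le_of_frequently_le' (Eventually.frequently ?_)
    filter_upwards [h] with n hn
    calc ∑ S : ((Finset.range n).filter A).powerset,
          ediam (PiNat.cylinder (fun i => decide (i ∈ S.1)) n) ^ (d : ℝ)
        ≤ ∑ S : ((Finset.range n).filter A).powerset, ((2⁻¹ : ℝ≥0∞) ^ n) ^ (d : ℝ) :=
          Finset.sum_le_sum fun S _ =>
            ENNReal.rpow_le_rpow (PiNat.ediam_cylinder_bool_le _ n) d.2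
      _ = (2 : ℝ≥0∞) ^ (Nat.count A n : ℝ) * 2 ^ (-(d * n : ℝ)) := by
          rw [Finset.sum_const, Finset.card_univ, Fintype.card_coe, Finset.card_powerset,
            ← Nat.count_eq_card_filter_range, nsmul_eq_mul, ENNReal.rpow_natCast,
            ENNReal.rpow_neg, mul_comm (d : ℝ), ENNReal.rpow_mul, ENNReal.rpow_natCast,
            ← ENNReal.inv_rpow, ENNReal.inv_pow]
          simp
      _ ≤ 2 ^ (d * n : ℝ) * 2 ^ (-(d * n : ℝ)) := by
          gcongr
          exact one_le_two
      _ = 1 := by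
          rw [← ENNReal.rpow_add _ _ two_ne_zero ENNReal.ofNat_ne_top, add_neg_cancel,
            ENNReal.rpow_zero]

/-- Mass distribution principle on the Cantor space, tested on cylinders. -/
theorem PiNat.le_hausdorffMeasure_of_cylinder {μ : Measure (ℕ → Bool)} {d : ℝ} (hd : 0 < d)
    (h : ∀ᶠ n : ℕ in atTop, ∀ x, μ (PiNat.cylinder x n) ≤ (2⁻¹ ^ n) ^ d) : μ ≤ μH[d] := by
  obtain ⟨N, hN⟩ := eventually_atTop.1 h
  refine Measure.le_hausdorffMeasure d μ (2⁻¹ ^ N) (by simp [pos_iff_ne_zero]) fun s hs => ?_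
  rcases s.eq_empty_or_nonempty with rfl | ⟨x, hx⟩
  · simp
  by_cases hdiff : ∃ n, ∃ y ∈ s, ∃ z ∈ s, y n ≠ z n
  · classical
    obtain ⟨y, hy, z, hz, hyz⟩ := Nat.find_spec hdiff
    set n := Nat.find hdiff
    have hmin (i : ℕ) (hi : i < n) (y) (hy : y ∈ s) : y i = x i := by
      by_contra hne
      exact Nat.find_min hdiff hi ⟨y, hy, x, hx, hne⟩
    have hne : y ≠ z := fun h => hyz (h ▸ rfl)
    have hfd : PiNat.firstDiff y z ≤ n := by
      by_contra! hlt
      exact hyz (PiNat.apply_eq_of_lt_firstDiff hlt)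
    have hdiam : 2⁻¹ ^ PiNat.firstDiff y z ≤ ediam s :=
      PiNat.edist_bool_eq_of_ne hne ▸ edist_le_ediam_of_mem hy hz
    have hNn : N ≤ n := by
      refine le_trans ?_ hfd
      have hle := hdiam.trans hs
      rw [← ENNReal.inv_pow, ← ENNReal.inv_pow, ENNReal.inv_le_inv] at hle
      exact (Nat.pow_le_pow_iff_right one_lt_two).1 (by exact_mod_cast hle)
    calc μ s ≤ μ (PiNat.cylinder x n) := measure_mono fun y hy i hi => hmin i hi y hy
      _ ≤ (2⁻¹ ^ n) ^ d := hN n hNn x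
      _ ≤ ediam s ^ d := ENNReal.rpow_le_rpow
          ((pow_le_pow_right_of_le_one' (ENNReal.inv_le_one.2 one_le_two) hfd).trans hdiam) hd.le
  · push Not at hdiff
    have hlim : Tendsto (fun n : ℕ => ((2⁻¹ : ℝ≥0∞) ^ n) ^ d) atTop (𝓝 0) := by
      have := ((ENNReal.continuous_rpow_const (y := d)).tendsto 0).comp
        (ENNReal.tendsto_pow_atTop_nhds_zero_of_lt_one (r := 2⁻¹) (by simp))
      rwa [ENNReal.zero_rpow_of_pos hd] at this
    refine le_trans (ge_of_tendsto hlim ?_) zero_le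
    filter_upwards [h] with n hn
    have hsub : s ⊆ PiNat.cylinder x n := fun y hy i _ => hdiff i y hy x hx
    exact (measure_mono hsub).trans (hn x)

theorem le_dimH_zeroOff {A : ℕ → Prop} [DecidablePred A] {d : ℝ≥0} (hd : 0 < d)
    (h : ∀ᶠ n : ℕ in atTop, d * n ≤ (Nat.count A n : ℝ)) : d ≤ dimH (zeroOff A) := by
  let coin : Measure Bool := (PMF.uniformOfFintype Bool).toMeasure
  let ν : ℕ → Measure Bool := fun n => if A n then coin else .dirac false
  have hcoin (b : Bool) : coin {b} = 2⁻¹ := by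
    rw [PMF.toMeasure_apply_singleton _ _ (measurableSet_singleton b)]
    simp
  have (n : ℕ) : IsProbabilityMeasure (ν n) := by
    by_cases hn : A n <;> simp only [ν, hn, if_true, if_false, coin] <;> infer_instance
  let μ := Measure.infinitePi ν
  have hcyl (n : ℕ) (x : ℕ → Bool) : μ (PiNat.cylinder x n) ≤ 2⁻¹ ^ Nat.count A n := by
    have hpi : PiNat.cylinder x n = Set.pi (Finset.range n) fun i => {x i} := by
      rw [PiNat.cylinder_eq_pi]
    rw [hpi, Measure.infinitePi_pi _ fun _ _ => measurableSet_singleton _,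
      Nat.count_eq_card_filter_range, ← Finset.prod_const, Finset.prod_filter]
    refine Finset.prod_le_prod' fun i _ => ?_
    by_cases hi : A i
    · simp [ν, hi, hcoin]
    · simpa only [hi, if_false] using prob_le_one
  have hμ : μ ≤ μH[(d : ℝ)] := by
    refine PiNat.le_hausdorffMeasure_of_cylinder hd ?_
    filter_upwards [h] with n hn x
    refine (hcyl n x).trans ?_
    rw [← ENNReal.rpow_natCast, ← ENNReal.rpow_natCast, ← ENNReal.rpow_mul, mul_comm]
    exact ENNReal.rpow_le_rpow_of_exponent_ge (ENNReal.inv_le_one.2 one_le_two) hn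
  have hone : μ (zeroOff A) = 1 := by
    have hpi : zeroOff A = Set.univ.pi fun n => {b | ¬ A n → b = false} := by
      ext x
      simp [zeroOff]
    rw [hpi, Measure.infinitePi_pi_univ _ fun _ => MeasurableSet.of_discrete]
    refine (tprod_congr fun n => ?_).trans tprod_one
    by_cases hn : A n
    · simp only [hn, not_true, false_imp_iff, ofPred_true, measure_univ]
    · simp [ν, hn]
  refine le_dimH_of_hausdorffMeasure_ne_zero fun h0 => ?_
  have := hμ (zeroOff A)
  rw [hone, h0] at this
  exact one_ne_zero (le_antisymm this zero_le)

/-- If `A` has asymptotic density `δ`, then the sequences vanishing outside `A` form a set of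
Hausdorff dimension `δ`. -/
theorem dimH_zeroOff {A : ℕ → Prop} [DecidablePred A] {δ : ℝ}
    (h : Tendsto (fun n : ℕ => (Nat.count A n : ℝ) / n) atTop (𝓝 δ)) :
    dimH (zeroOff A) = ENNReal.ofReal δ := by
  refine le_antisymm (le_of_forall_gt_imp_ge_of_dense fun a ha => ?_)
    (ENNReal.le_of_forall_nnreal_lt fun d hd => ?_)
  · obtain ⟨d, hδd, hda⟩ := ENNReal.lt_iff_exists_nnreal_btwn.1 ha
    refine (dimH_zeroOff_le ?_).trans hda.le
    have hδd' : δ < d := (Real.le_coe_toNNReal δ).trans_lt (ENNReal.coe_lt_coe.1 hδd)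
    filter_upwards [h.eventually_lt_const hδd', eventually_gt_atTop 0] with n hn hpos
    exact ((div_lt_iff₀ (by positivity)).1 hn).le
  · rcases eq_zero_or_pos d with rfl | hpos
    · simp
    refine le_dimH_zeroOff hpos ?_
    rw [ENNReal.ofReal, ENNReal.coe_lt_coe, Real.lt_toNNReal_iff_coe_lt] at hd
    filter_upwards [h.eventually_const_lt hd, eventually_gt_atTop 0] with n hn hpos
    exact ((lt_div_iff₀ (by positivity)).1 hn).le

/-- Slowly growing integer sequence with unit steps, unbounded, and asymptotic to `t * k`. -/
noncomputable def floorSeq (t : ℝ) (k : ℕ) : ℕ := ⌊t * k + (1 - t) * √k⌋₊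

theorem floorSeq_mono {t : ℝ} (h0 : 0 ≤ t) (h1 : t ≤ 1) : Monotone (floorSeq t) := fun a b hab => by
  have : (a : ℝ) ≤ b := by exact_mod_cast hab
  have : 0 ≤ 1 - t := by linarith
  unfold floorSeq
  gcongr

theorem floorSeq_succ_le {t : ℝ} (h0 : 0 ≤ t) (h1 : t ≤ 1) (k : ℕ) :
    floorSeq t (k + 1) ≤ floorSeq t k + 1 := by
  have hsqrt : √((k : ℝ) + 1) ≤ √k + 1 := by
    rw [Real.sqrt_le_left (by positivity)]
    nlinarith [Real.sq_sqrt (Nat.cast_nonneg (α := ℝ) k), Real.sqrt_nonneg (k : ℝ)]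
  have hnonneg : 0 ≤ t * k + (1 - t) * √k :=
    add_nonneg (by positivity) (mul_nonneg (by linarith) (by positivity))
  unfold floorSeq
  rw [← Nat.floor_add_one hnonneg]
  refine Nat.floor_mono ?_
  push_cast
  nlinarith

theorem floorSeq_le {t : ℝ} (h0 : 0 ≤ t) (h1 : t ≤ 1) (k : ℕ) :
    (floorSeq t k : ℝ) ≤ t * k + √k := by
  have hnonneg : 0 ≤ t * k + (1 - t) * √k :=
    add_nonneg (by positivity) (mul_nonneg (by linarith) (by positivity))
  refine (Nat.floor_le hnonneg).trans ?_
  nlinarith [Real.sqrt_nonneg (k : ℝ)]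

theorem lt_floorSeq_add_one {t : ℝ} (h1 : t ≤ 1) (k : ℕ) : t * k < floorSeq t k + 1 := by
  refine lt_of_le_of_lt ?_ (Nat.lt_floor_add_one _)
  nlinarith [Real.sqrt_nonneg (k : ℝ)]

theorem le_floorSeq_sq {t : ℝ} (h0 : 0 ≤ t) (m : ℕ) : m ≤ floorSeq t (m ^ 2) := by
  refine Nat.le_floor ?_
  have hm : (m : ℝ) ≤ m ^ 2 := by exact_mod_cast Nat.le_self_pow two_ne_zero m
  push_cast
  rw [Real.sqrt_sq m.cast_nonneg]
  nlinarith

/-- All odd positions, together with those even positions `2 * k` at which `floorSeq t` jumps. -/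
def freePos (t : ℝ) (n : ℕ) : Prop := Odd n ∨ floorSeq t (n / 2) < floorSeq t (n / 2 + 1)

theorem freePos_two_mul (t : ℝ) (k : ℕ) :
    freePos t (2 * k) ↔ floorSeq t k < floorSeq t (k + 1) := by
  have : ¬ Odd (2 * k) := by simp
  simp [freePos, this]

theorem count_freePos_two_mul {t : ℝ} [DecidablePred (freePos t)] (h0 : 0 ≤ t) (h1 : t ≤ 1)
    (k : ℕ) : Nat.count (freePos t) (2 * k) = k + floorSeq t k := by
  induction k with
  | zero => simp [floorSeq]
  | succ k ih =>
    have hodd : freePos t (2 * k + 1) := .inl ⟨k, rfl⟩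
    have hmono := floorSeq_mono h0 h1 k.le_succ
    have hsucc := floorSeq_succ_le h0 h1 k
    rw [show 2 * (k + 1) = 2 * k + 1 + 1 by ring, Nat.count_succ, Nat.count_succ, ih, if_pos hodd]
    simp only [freePos_two_mul]
    split_ifs <;> grind

theorem infinite_even_freePos {t : ℝ} (h0 : 0 ≤ t) :
    {n | Even n ∧ freePos t n}.Infinite := by
  rw [infinite_iff_exists_gt]
  by_contra! hcon
  obtain ⟨N, hN⟩ := hcon
  have hconst (k : ℕ) (hk : N + 1 ≤ k) : floorSeq t k ≤ floorSeq t (N + 1) := by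
    induction k, hk using Nat.le_induction with
    | base => rfl
    | succ k hk ih =>
      refine le_trans ?_ ih
      by_contra! hlt
      have := hN (2 * k) ⟨even_two_mul k, (freePos_two_mul t k).2 hlt⟩
      omega
  have hbig := le_floorSeq_sq h0 (N + floorSeq t (N + 1) + 1)
  have := hconst ((N + floorSeq t (N + 1) + 1) ^ 2) (by nlinarith)
  omega

theorem tendsto_count_freePos {t : ℝ} [DecidablePred (freePos t)] (h0 : 0 ≤ t) (h1 : t ≤ 1) :
    Tendsto (fun n : ℕ => (Nat.count (freePos t) n : ℝ) / n) atTop (𝓝 ((1 + t) / 2)) := by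
  have hbound (n : ℕ) : |(Nat.count (freePos t) n : ℝ) - (1 + t) / 2 * n| ≤ √n + 3 := by
    set k := n / 2 with hk
    have hcount := count_freePos_two_mul h0 h1 k
    have hle := Nat.count_monotone (freePos t) (show 2 * k ≤ n by omega)
    have hle' : Nat.count (freePos t) n ≤ Nat.count (freePos t) (2 * k) + 1 := by
      refine (Nat.count_monotone (freePos t) (show n ≤ 2 * k + 1 by omega)).trans ?_
      rw [Nat.count_succ]
      split_ifs <;> omega
    rw [hcount] at hle hle'
    have hlo : ((k + floorSeq t k : ℕ) : ℝ) ≤ Nat.count (freePos t) n := by exact_mod_cast hle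
    have hhi : (Nat.count (freePos t) n : ℝ) ≤ (k + floorSeq t k + 1 : ℕ) := by exact_mod_cast hle'
    have hkn : (2 * k : ℝ) ≤ n := by exact_mod_cast (show 2 * k ≤ n by omega)
    have hnk : (n : ℝ) ≤ 2 * k + 1 := by exact_mod_cast (show n ≤ 2 * k + 1 by omega)
    have hsqrt : √(k : ℝ) ≤ √n := Real.sqrt_le_sqrt (by linarith [k.cast_nonneg (α := ℝ)])
    have hup := floorSeq_le h0 h1 k
    have hdown := lt_floorSeq_add_one h1 k
    push_cast at hlo hhi
    rw [abs_le]
    constructor <;> nlinarith [Real.sqrt_nonneg (n : ℝ)]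
  have hlim : Tendsto (fun n : ℕ => (√(n : ℝ))⁻¹ + 3 * (n : ℝ)⁻¹) atTop (𝓝 0) := by
    have hsqrt : Tendsto (fun n : ℕ => (√(n : ℝ))⁻¹) atTop (𝓝 0) :=
      (Real.tendsto_sqrt_atTop.comp tendsto_natCast_atTop_atTop).inv_tendsto_atTop
    simpa using hsqrt.add ((tendsto_inv_atTop_nhds_zero_nat (𝕜 := ℝ)).const_mul 3)
  rw [tendsto_iff_dist_tendsto_zero]
  refine squeeze_zero' (.of_forall fun _ => dist_nonneg) ?_ hlim
  filter_upwards [eventually_gt_atTop 0] with n hn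
  have hn' : (0 : ℝ) < n := by exact_mod_cast hn
  calc dist ((Nat.count (freePos t) n : ℝ) / n) ((1 + t) / 2)
      = |(Nat.count (freePos t) n : ℝ) - (1 + t) / 2 * n| / n := by
        rw [Real.dist_eq, ← abs_of_pos hn', ← abs_div, abs_of_pos hn']
        congr 1
        field_simp
    _ ≤ (√n + 3) / n := by gcongr; exact hbound n
    _ = (√n)⁻¹ + 3 * (n : ℝ)⁻¹ := by
        rw [add_div, Real.sqrt_div_self', one_div, div_eq_mul_inv 3]

/-- Removing one element does not change the asymptotic density. -/
theorem tendsto_count_and_ne {A : ℕ → Prop} [DecidablePred A] {δ : ℝ} (m : ℕ)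
    (h : Tendsto (fun n : ℕ => (Nat.count A n : ℝ) / n) atTop (𝓝 δ)) :
    Tendsto (fun n : ℕ => (Nat.count (fun i => A i ∧ i ≠ m) n : ℝ) / n) atTop (𝓝 δ) := by
  have hle (n : ℕ) : Nat.count (fun i => A i ∧ i ≠ m) n ≤ Nat.count A n :=
    Nat.count_mono_left fun _ _ h => h.1
  have hge (n : ℕ) : Nat.count A n ≤ Nat.count (fun i => A i ∧ i ≠ m) n + 1 := by
    rw [Nat.count_eq_card_filter_range, Nat.count_eq_card_filter_range]
    refine (Finset.card_le_card (t := insert m _) fun i hi => ?_).trans (Finset.card_insert_le m _)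
    grind
  have hlim := h.sub (tendsto_inv_atTop_nhds_zero_nat (𝕜 := ℝ))
  rw [sub_zero] at hlim
  refine tendsto_of_tendsto_of_tendsto_of_le_of_le hlim h (fun n => ?_) fun n => ?_
  · have : (Nat.count A n : ℝ) ≤ Nat.count (fun i => A i ∧ i ≠ m) n + 1 := by exact_mod_cast hge n
    simp only [← one_div]
    rw [← sub_div]
    gcongr
    linarith
  · have : (Nat.count (fun i => A i ∧ i ≠ m) n : ℝ) ≤ Nat.count A n := by exact_mod_cast hle n
    gcongr

/-- For every `δ ∈ [1/2, 1]` there are sets of Hausdorff dimension `δ` such that the binary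
Gale–Stewart game with that target set is, respectively, non-determined, won by Player I,
and won by Player II. -/
theorem exists_sets_of_dimH_with_all_game_outcomes (δ : ℝ) (hδ : δ ∈ Set.Icc (1 / 2 : ℝ) 1) :
    ∃ W WI WII : Set (ℕ → Bool),
      dimH W = ENNReal.ofReal δ ∧ dimH WI = ENNReal.ofReal δ ∧ dimH WII = ENNReal.ofReal δ ∧
      (¬ ∃ sI : List Bool → Bool, ∀ x : ℕ → Bool, ConsistentI sI x → x ∈ W) ∧
      (¬ ∃ sII : List Bool → Bool, ∀ x : ℕ → Bool, ConsistentII sII x → x ∉ W) ∧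
      (∃ sI : List Bool → Bool, ∀ x : ℕ → Bool, ConsistentI sI x → x ∈ WI) ∧
      (∃ sII : List Bool → Bool, ∀ x : ℕ → Bool, ConsistentII sII x → x ∉ WII) := by
  classical
  obtain ⟨hδ0, hδ1⟩ := hδ
  set t := 2 * δ - 1 with ht
  have h0 : 0 ≤ t := by linarith
  have h1 : t ≤ 1 := by linarith
  have hdens := tendsto_count_freePos h0 h1
  rw [show (1 + t) / 2 = δ by rw [ht]; ring] at hdens
  have hdim := dimH_zeroOff hdens
  have hdim' := dimH_zeroOff (tendsto_count_and_ne 1 hdens)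
  have hodd (n : ℕ) (hn : Odd n) : freePos t n := .inl hn
  obtain ⟨Y, hY1, hYI, hYII⟩ := exists_nondetermining_set hodd (infinite_even_freePos h0)
  refine ⟨zeroOff (freePos t) \ Y, zeroOff (freePos t), zeroOff fun i => freePos t i ∧ i ≠ 1,
    le_antisymm ?_ ?_, hdim, hdim', ?_, ?_, ⟨fun _ => false, fun x hx n hn => ?_⟩,
    ⟨fun _ => true, fun x hx hmem => ?_⟩⟩
  · exact hdim ▸ dimH_mono sdiff_subset
  · refine hdim'.symm.trans_le
      (dimH_mono fun x hx => ⟨fun n hn => hx n fun h => hn h.1, fun hxY => ?_⟩)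
    have := hY1 x hxY
    simp [hx 1 (by simp)] at this
  · rintro ⟨sI, hsI⟩
    obtain ⟨x, hxY, hx⟩ := hYI sI
    exact (hsI x hx).2 hxY
  · rintro ⟨sII, hsII⟩
    obtain ⟨x, hxY, hx, hx0⟩ := hYII sII
    exact hsII x hx ⟨hx0, hxY⟩
  · exact hx n (Nat.not_odd_iff_even.1 fun h => hn (hodd n h))
  · have := hx 1 odd_one
    simp [hmem 1 (by simp)] at this
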